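/- Let φ be an entire function on ℂ^d of order at most 2 (i.e. for every ε > 0 there is C_ε with |φ(z)| ≤ C_ε exp(‖z‖^{2+ε}) for all z ∈ ℂ^d) such that on every complex line, either φ is identically 0 or it has at most N zeros counted with multiplicity. Then there exist a polynomial P of degree at most N and a polynomial Q of degree at most 2 such that φ(z) = P(z) e^{Q(z)} for all z ∈ ℂ^d. -/

import Mathlib

open MeasureTheory Real Complex MvPolynomial

/-!
Translate so that `φ` does not vanish at the origin and normalize to `ψ 0 = 1`. On each complex line
through the origin, the Borel–Carathéodory inequality and Liouville's theorem give
`ψ (t z) = (∏ i, (1 - l z i * t)) * exp (c₁ z * t + ⋯ + c_m z * t ^ m)`, with `N` numbers `l z i`.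
A priori nothing is known about the dependence of `l` and `c₁, …, c_m` on `z`, except that `‖l z i‖`
grows at most linearly, because `ψ` has no zeros near the origin.

The homogeneous part of degree `k` of `log ψ` is `c_k - s_k / k`, where `s_k = ∑ i, l z i ^ k` and
`c_k = 0` for `k > m`. By Cauchy's estimates it is a polynomial of degree at most `k` on every line;
in particular so is `s_k` for `k > m`, and the point is to obtain the same for the remaining power
sums. On a given line, the Hankel matrix of size `N + 1` of `s_k` with `k > m` is singular, so these
satisfy a linear recurrence with polynomial coefficients; cancelling powers of the shift makes its
lowest coefficient nonzero, and it extends down to `s_1`. Hence the remaining `s_k` are meromorphic.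
They are also continuous, by compactness and since the high power sums of `N` numbers determine all
of them, and therefore they are entire, and polynomials by Liouville's theorem.

Consequently `c₁ + ⋯ + c_m` and `∏ i, (1 - l z i) = ψ * exp (-(c₁ + ⋯ + c_m))` are polynomials on
every line, of degrees at most `m` and `N`. A function that is a polynomial of bounded degree on
every line is a polynomial, by Lagrange interpolation in one coordinate after the other.
-/

namespace FewZeros

section OneVariable

theorem tendsto_one_add_rpow_div_pow_atTop {α : ℝ} {k : ℕ} (hα : α < k) :
    Filter.Tendsto (fun R : ℝ => (1 + R) ^ α / R ^ k) Filter.atTop (nhds 0) := by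
  have hdecay : Filter.Tendsto (fun R : ℝ => (1 + R) ^ (-(k - α))) Filter.atTop (nhds 0) :=
    (tendsto_rpow_neg_atTop (by linarith)).comp
      (Filter.tendsto_atTop_add_const_left _ 1 Filter.tendsto_id)
  have hratio : Filter.Tendsto (fun R : ℝ => (R⁻¹ + 1) ^ k) Filter.atTop (nhds ((0 + 1) ^ k)) :=
    (tendsto_inv_atTop_zero.add_const 1).pow k
  have hmul := hdecay.mul hratio
  rw [zero_mul] at hmul
  refine hmul.congr' ?_
  filter_upwards [Filter.eventually_gt_atTop 0] with R hR
  have hquot : R⁻¹ + 1 = (1 + R) / R := by field_simp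
  rw [neg_sub, Real.rpow_sub (by linarith), Real.rpow_natCast, hquot, div_pow]
  field_simp

theorem exists_polynomial_of_norm_le_rpow {f : ℂ → ℂ} (hf : Differentiable ℂ f) {K α : ℝ} {m : ℕ}
    (hα : α < m + 1) (hbound : ∀ w, ‖f w‖ ≤ K * (1 + ‖w‖) ^ α) :
    ∃ p : Polynomial ℂ, p.natDegree ≤ m ∧ ∀ w, f w = p.eval w := by
  have hvanish : ∀ k, m < k → iteratedDeriv k f 0 = 0 := by
    intro k hk
    have hcauchy : ∀ R : ℝ, 0 < R →
        ‖iteratedDeriv k f 0‖ ≤ k.factorial * K * ((1 + R) ^ α / R ^ k) := fun R hR => by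
      refine (Complex.norm_iteratedDeriv_le_of_forall_mem_sphere_norm_le (C := K * (1 + R) ^ α) k hR
        hf.diffContOnCl fun z hz => ?_).trans_eq (by ring)
      simpa only [mem_sphere_zero_iff_norm.1 hz] using hbound z
    have hlim := (tendsto_one_add_rpow_div_pow_atTop (k := k)
      (hα.trans_le (by exact_mod_cast hk))).const_mul (k.factorial * K)
    rw [mul_zero] at hlim
    exact norm_le_zero_iff.1 (ge_of_tendsto hlim
      ((Filter.eventually_gt_atTop 0).mono hcauchy))
  refine ⟨∑ k ∈ Finset.range (m + 1),
    Polynomial.C ((k.factorial : ℂ)⁻¹ * iteratedDeriv k f 0) * Polynomial.X ^ k, ?_, fun w => ?_⟩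
  · exact Polynomial.natDegree_sum_le_of_forall_le _ _ fun k hk =>
      (Polynomial.natDegree_C_mul_X_pow_le _ _).trans (Finset.mem_range_succ_iff.1 hk)
  · rw [← Complex.taylorSeries_eq_of_entire' 0 w hf, tsum_eq_sum (s := Finset.range (m + 1))]
    · simp [Polynomial.eval_finsetSum]
    · intro k hk
      simp [hvanish k (by simpa using hk)]

theorem exists_eval_eq_prod_one_sub {K : Type*} [Field K] [IsAlgClosed K] {N : ℕ}
    {p : Polynomial K} (hp : p.natDegree ≤ N) (h0 : p.eval 0 ≠ 0) :
    ∃ l : Fin N → K, ∀ t, p.eval t = p.eval 0 * ∏ i, (1 - l i * t) := by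
  induction N generalizing p with
  | zero =>
    rw [Polynomial.eq_C_of_natDegree_le_zero hp]
    exact ⟨fun _ => 0, by simp⟩
  | succ n ih =>
    by_cases hconst : p.degree = 0
    · rw [Polynomial.eq_C_of_degree_eq_zero hconst]
      exact ⟨fun _ => 0, by simp⟩
    obtain ⟨r, hroot⟩ := IsAlgClosed.exists_root p hconst
    obtain ⟨q, rfl⟩ := Polynomial.dvd_iff_isRoot.2 hroot
    rw [Polynomial.eval_mul] at h0
    have hr : r ≠ 0 := by rintro rfl; simp at h0
    have hq : q.eval 0 ≠ 0 := right_ne_zero_of_mul h0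
    rw [Polynomial.natDegree_mul (Polynomial.X_sub_C_ne_zero r) (by rintro rfl; simp at hq),
      Polynomial.natDegree_X_sub_C] at hp
    obtain ⟨l, hl⟩ := ih (by omega) hq
    refine ⟨Fin.cons r⁻¹ l, fun t => ?_⟩
    simp only [Fin.prod_univ_succ, Polynomial.eval_mul, Polynomial.eval_sub, Polynomial.eval_X,
      Polynomial.eval_C, Fin.cons_zero, Fin.cons_succ, hl t]
    field_simp
    ring

theorem exists_entire_log {h : ℂ → ℂ} (hd : Differentiable ℂ h) (hne : ∀ t, h t ≠ 0)
    (h0 : h 0 = 1) :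
    ∃ q : ℂ → ℂ, Differentiable ℂ q ∧ q 0 = 0 ∧ ∀ t, h t = Complex.exp (q t) := by
  have hlogDeriv : Differentiable ℂ fun t => deriv h t / h t :=
    (hd.contDiff (n := 2)).differentiable_deriv_two.div hd hne
  obtain ⟨q, hq0, hq⟩ := hlogDeriv.isExactOn_univ.with_val_at 0 0
  replace hq : ∀ t, HasDerivAt q (deriv h t / h t) t := fun t => hq t (Set.mem_univ _)
  refine ⟨q, fun t => (hq t).differentiableAt, hq0, fun t => ?_⟩
  have hderiv : ∀ t, HasDerivAt (fun t => h t * Complex.exp (-q t)) 0 t := fun t => by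
    refine ((hd t).hasDerivAt.mul (hq t).fun_neg.cexp).congr_deriv ?_
    have := hne t
    field_simp
    ring
  have hconst := is_const_of_deriv_eq_zero (fun t => (hderiv t).differentiableAt)
    (fun t => (hderiv t).deriv) t 0
  simpa [h0, hq0, Complex.exp_neg, mul_inv_eq_one₀] using hconst

theorem exists_polynomial_of_re_le_rpow {q : ℂ → ℂ} (hq : Differentiable ℂ q) (hq0 : q 0 = 0)
    {B ρ : ℝ} {m : ℕ} (hρ0 : 0 ≤ ρ) (hρ : ρ < m + 1) (hre : ∀ t, (q t).re ≤ B * (1 + ‖t‖) ^ ρ) :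
    ∃ p : Polynomial ℂ, p.natDegree ≤ m ∧ ∀ t, q t = p.eval t := by
  have hB : 0 ≤ B := by simpa [hq0] using hre 0
  refine exists_polynomial_of_norm_le_rpow hq hρ (K := 2 * (B + 1) * 2 ^ ρ) fun t => ?_
  have ht := norm_nonneg t
  have hdisc : Set.MapsTo q (Metric.ball 0 (2 * ‖t‖ + 1))
      {z | z.re ≤ (B + 1) * (2 * (1 + ‖t‖)) ^ ρ} := fun s hs => by
    have hs : ‖s‖ < 2 * ‖t‖ + 1 := by simpa using hs
    refine (hre s).trans ?_
    gcongr
    · linarith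
    · linarith
  have hratio : ‖t‖ / (2 * ‖t‖ + 1 - ‖t‖) ≤ 1 := by
    rw [div_le_one (by linarith)]
    linarith
  calc ‖q t‖ ≤ 2 * ((B + 1) * (2 * (1 + ‖t‖)) ^ ρ) * ‖t‖ / (2 * ‖t‖ + 1 - ‖t‖) :=
        Complex.borelCaratheodory_zero (by positivity) hq.differentiableOn hdisc (by positivity)
          (by simp; linarith) hq0
    _ = 2 * (B + 1) * 2 ^ ρ * (1 + ‖t‖) ^ ρ * (‖t‖ / (2 * ‖t‖ + 1 - ‖t‖)) := by
        rw [Real.mul_rpow zero_le_two (by positivity)]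
        ring
    _ ≤ 2 * (B + 1) * 2 ^ ρ * (1 + ‖t‖) ^ ρ := mul_le_of_le_one_right (by positivity) hratio

theorem one_le_norm_prod_one_sub {ι : Type*} [Fintype ι] (l : ι → ℂ) {t : ℂ}
    (ht : ∑ i, 2 * ‖l i‖⁻¹ ≤ ‖t‖) : 1 ≤ ‖∏ i, (1 - l i * t)‖ := by
  rw [norm_prod]
  refine Finset.one_le_prod fun i _ => ?_
  by_cases hi : l i = 0
  · simp [hi]
  have : 0 < ‖l i‖ := norm_pos_iff.2 hi
  have hti : 2 * ‖l i‖⁻¹ ≤ ‖t‖ := le_trans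
    (Finset.single_le_sum (f := fun i => 2 * ‖l i‖⁻¹) (fun i _ => by positivity)
      (Finset.mem_univ i)) ht
  have htwo : 2 ≤ ‖l i * t‖ := by
    rw [norm_mul]
    calc (2 : ℝ) = ‖l i‖ * (2 * ‖l i‖⁻¹) := by field_simp
      _ ≤ ‖l i‖ * ‖t‖ := by gcongr
  have htri := norm_sub_norm_le (l i * t) 1
  rw [norm_one, norm_sub_rev] at htri
  linarith

theorem exists_re_le_of_norm_prod_mul_exp_le {ι : Type*} [Fintype ι] (l : ι → ℂ) {q : ℂ → ℂ}
    (hq : Continuous q) {K A ρ : ℝ} (hK : 1 ≤ K) (hA : 0 ≤ A) (hρ0 : 0 ≤ ρ)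
    (hbound : ∀ t, ‖(∏ i, (1 - l i * t)) * Complex.exp (q t)‖ ≤
      K * Real.exp (A * (1 + ‖t‖) ^ ρ)) :
    ∃ B, ∀ t, (q t).re ≤ B * (1 + ‖t‖) ^ ρ := by
  set R := ∑ i, 2 * ‖l i‖⁻¹
  obtain ⟨M, hM⟩ := (isCompact_closedBall (0 : ℂ) R).exists_bound_of_continuousOn hq.continuousOn
  have hlogK : 0 ≤ Real.log K := Real.log_nonneg hK
  refine ⟨|M| + Real.log K + A, fun t => ?_⟩
  have hone : 1 ≤ (1 + ‖t‖) ^ ρ := Real.one_le_rpow (by linarith [norm_nonneg t]) hρ0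
  suffices (q t).re ≤ |M| + Real.log K + A * (1 + ‖t‖) ^ ρ by
    nlinarith [abs_nonneg M, mul_nonneg hlogK (sub_nonneg.2 hone)]
  rcases le_total R ‖t‖ with hfar | hnear
  · have hexp : Real.exp (q t).re ≤ K * Real.exp (A * (1 + ‖t‖) ^ ρ) :=
      calc Real.exp (q t).re = ‖Complex.exp (q t)‖ := (Complex.norm_exp _).symm
        _ ≤ ‖∏ i, (1 - l i * t)‖ * ‖Complex.exp (q t)‖ :=
          le_mul_of_one_le_left (norm_nonneg _) (one_le_norm_prod_one_sub l hfar)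
        _ = ‖(∏ i, (1 - l i * t)) * Complex.exp (q t)‖ := (norm_mul _ _).symm
        _ ≤ _ := hbound t
    rw [← Real.le_log_iff_exp_le (by positivity), Real.log_mul (by positivity) (by positivity),
      Real.log_exp] at hexp
    linarith [abs_nonneg M]
  · have hqt := (Complex.re_le_norm (q t)).trans (hM t (by simpa using hnear))
    have : 0 ≤ A * (1 + ‖t‖) ^ ρ := by positivity
    linarith [le_abs_self M]

theorem exists_eq_prod_mul_exp {m N : ℕ} {f : ℂ → ℂ} (f0 : f 0 = 1) {K A ρ : ℝ} (hA : 0 ≤ A)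
    (hρ0 : 0 ≤ ρ) (hρ : ρ < m + 1) (hbound : ∀ t, ‖f t‖ ≤ K * Real.exp (A * (1 + ‖t‖) ^ ρ))
    {p : Polynomial ℂ} {h : ℂ → ℂ} (hp : p.natDegree ≤ N) (hd : Differentiable ℂ h)
    (hne : ∀ t, h t ≠ 0) (hf : ∀ t, f t = p.eval t * h t) :
    ∃ (l : Fin N → ℂ) (q : Polynomial ℂ), q.natDegree ≤ m ∧ q.eval 0 = 0 ∧
      ∀ t, f t = (∏ i, (1 - l i * t)) * Complex.exp (q.eval t) := by
  have hp0 : p.eval 0 ≠ 0 := left_ne_zero_of_mul (by rw [← hf, f0]; exact one_ne_zero)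
  obtain ⟨l, hl⟩ := exists_eval_eq_prod_one_sub hp hp0
  obtain ⟨q, hqd, hq0, hq⟩ := exists_entire_log (h := fun t => p.eval 0 * h t)
    (hd.const_mul _) (fun t => mul_ne_zero hp0 (hne t)) (by rw [← hf, f0])
  have hfq : ∀ t, f t = (∏ i, (1 - l i * t)) * Complex.exp (q t) := fun t => by
    rw [hf, ← hq, hl]
    ring
  obtain ⟨B, hB⟩ := exists_re_le_of_norm_prod_mul_exp_le l hqd.continuous (K := max K 1) (A := A)
    (le_max_right _ _) hA hρ0 fun t => by
      rw [← hfq]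
      exact (hbound t).trans (by gcongr; exact le_max_left _ _)
  obtain ⟨r, hr, hqr⟩ := exists_polynomial_of_re_le_rpow hqd hq0 hρ0 hρ hB
  exact ⟨l, r, hr, by rw [← hqr, hq0], fun t => by rw [hfq, hqr]⟩

end OneVariable

section PowerSums

variable {ι K : Type*} [Fintype ι] [Field K]

theorem sum_mul_pow_eq_zero_of_consecutive {c x : ι → K} {M : ℕ}
    (h : ∀ k < Fintype.card ι, ∑ i, c i * x i ^ (M + k) = 0) {m : ℕ} (hm : m ≠ 0) :
    ∑ i, c i * x i ^ m = 0 := by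
  classical
  cases isEmpty_or_nonempty ι
  · exact Fintype.sum_empty _
  set T := Finset.univ.image x
  -- `p` interpolates `y ^ (m - M)`; as `m ≠ 0`, the junk value at the node `y = 0` is harmless.
  set p := Lagrange.interpolate T id fun y => y ^ m / y ^ M
  have hdeg : p.natDegree < Fintype.card ι := by
    rcases eq_or_ne p 0 with hp | hp
    · rw [hp, Polynomial.natDegree_zero]
      exact Fintype.card_pos
    · rw [Polynomial.natDegree_lt_iff_degree_lt hp]
      exact (Lagrange.degree_interpolate_lt _ Function.injective_id.injOn).trans_le
        (by exact_mod_cast Finset.card_image_le)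
  have hp : ∀ i, x i ^ m = x i ^ M * p.eval (x i) := fun i => by
    have hnode := Lagrange.eval_interpolate_at_node (s := T) (v := id) (fun y => y ^ m / y ^ M)
      Function.injective_id.injOn (Finset.mem_image_of_mem x (Finset.mem_univ i))
    rw [show p.eval (x i) = x i ^ m / x i ^ M from hnode]
    rcases eq_or_ne (x i) 0 with h0 | h0
    · simp [h0, hm]
    · field_simp
  calc ∑ i, c i * x i ^ m
      = ∑ i, ∑ k ∈ Finset.range (Fintype.card ι), p.coeff k * (c i * x i ^ (M + k)) := by
        refine Finset.sum_congr rfl fun i _ => ?_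
        rw [hp, Polynomial.eval_eq_sum_range' hdeg, Finset.mul_sum, Finset.mul_sum]
        exact Finset.sum_congr rfl fun k _ => by ring
    _ = ∑ k ∈ Finset.range (Fintype.card ι), p.coeff k * ∑ i, c i * x i ^ (M + k) := by
        rw [Finset.sum_comm]
        simp_rw [Finset.mul_sum]
    _ = 0 := Finset.sum_eq_zero fun k hk => by rw [h k (Finset.mem_range.1 hk), mul_zero]

theorem sum_pow_eq_of_forall_ge {x y : ι → K} {M : ℕ}
    (h : ∀ k, M ≤ k → ∑ i, x i ^ k = ∑ i, y i ^ k) {m : ℕ} (hm : m ≠ 0) :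
    ∑ i, x i ^ m = ∑ i, y i ^ m := by
  have hsigned : ∀ k, ∑ i, Sum.elim (fun _ => 1) (fun _ => -1) i * Sum.elim x y i ^ k =
      ∑ i, x i ^ k - ∑ i, y i ^ k := fun k => by
    simp [Fintype.sum_sum_type, sub_eq_add_neg]
  refine sub_eq_zero.1 ((hsigned m).symm.trans
    (sum_mul_pow_eq_zero_of_consecutive (M := M) (fun k _ => ?_) hm))
  rw [hsigned, h _ (Nat.le_add_right M k), sub_self]

theorem det_hankel_sum_pow_eq_zero (x : ι → K) (M : ℕ) :
    (Matrix.of fun i j : Fin (Fintype.card ι + 1) => ∑ a, x a ^ (M + i + j)).det = 0 := by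
  by_contra hdet
  have hfactor : (Matrix.of fun i j : Fin (Fintype.card ι + 1) => ∑ a, x a ^ (M + i + j)) =
      (Matrix.of fun (i : Fin (Fintype.card ι + 1)) a => x a ^ (M + i)) *
        Matrix.of fun a (j : Fin (Fintype.card ι + 1)) => x a ^ (j : ℕ) := by
    ext i j
    simp [Matrix.mul_apply, pow_add]
  have hrank := Matrix.rank_of_det_ne_zero hdet
  rw [hfactor] at hrank
  have := hrank.symm.trans_le ((Matrix.rank_mul_le_left _ _).trans (Matrix.rank_le_card_width _))
  simp at this

theorem sum_evalEval_mul_pow (U : Polynomial (Polynomial K)) (w : K) (x : ι → K) (m : ℕ) :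
    ∑ i, U.evalEval w (x i) * x i ^ m =
      ∑ j ∈ Finset.range (U.natDegree + 1), (U.coeff j).eval w * ∑ i, x i ^ (m + j) := by
  simp_rw [Polynomial.evalEval, Polynomial.eval_eq_sum_range (p := U), Polynomial.eval_finsetSum,
    Polynomial.eval_mul, Polynomial.eval_pow, Polynomial.eval_C, Finset.sum_mul, Finset.mul_sum]
  rw [Finset.sum_comm]
  exact Finset.sum_congr rfl fun j _ => Finset.sum_congr rfl fun i _ => by ring

variable [Infinite K]

theorem exists_annihilator_of_eval_eq_sum_pow {l : K → ι → K} {S : ℕ → Polynomial K} {M : ℕ}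
    (hS : ∀ k, M ≤ k → ∀ w, (S k).eval w = ∑ i, l w i ^ k) :
    ∃ V : Polynomial (Polynomial K), V ≠ 0 ∧
      ∀ w m, m ≠ 0 → ∑ i, V.evalEval w (l w i) * l w i ^ m = 0 := by
  classical
  set H : Matrix (Fin (Fintype.card ι + 1)) (Fin (Fintype.card ι + 1)) (Polynomial K) :=
    .of fun i j => S (M + i + j)
  have hdet : H.det = 0 := Polynomial.funext fun w => by
    rw [Polynomial.eval_zero, ← Polynomial.coe_evalRingHom, RingHom.map_det,
      ← det_hankel_sum_pow_eq_zero (l w) M]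
    congr 1
    ext i j
    simp [H, hS _ (show M ≤ M + i + j by omega)]
  obtain ⟨v, hv0, hv⟩ := Matrix.exists_mulVec_eq_zero_iff.2 hdet
  have hV0 : Polynomial.ofFn _ v ≠ 0 := fun h =>
    hv0 (Polynomial.injective_ofFn _ (h.trans (map_zero _).symm))
  refine ⟨Polynomial.ofFn _ v, hV0, fun w m hm =>
    sum_mul_pow_eq_zero_of_consecutive (M := M) (fun k hk => ?_) hm⟩
  have hrow := congrArg (Polynomial.eval w) (congrFun hv ⟨k, by omega⟩)
  simp only [Matrix.mulVec, dotProduct, H, Matrix.of_apply, Polynomial.eval_finsetSum,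
    Polynomial.eval_mul, Pi.zero_apply, Polynomial.eval_zero] at hrow
  simp only [Polynomial.ofFn_eq_sum_monomial, Polynomial.evalEval_finsetSum, Polynomial.evalEval,
    Polynomial.eval_monomial, Polynomial.eval_mul, Polynomial.eval_pow, Polynomial.eval_C,
    Finset.sum_mul]
  rw [Finset.sum_comm, ← hrow]
  refine Finset.sum_congr rfl fun j _ => ?_
  rw [hS _ (by omega), Finset.sum_mul]
  exact Finset.sum_congr rfl fun i _ => by ring

theorem exists_annihilator_coeff_zero_ne_zero {l : K → ι → K} {S : ℕ → Polynomial K} {M : ℕ}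
    (hS : ∀ k, M ≤ k → ∀ w, (S k).eval w = ∑ i, l w i ^ k) :
    ∃ U : Polynomial (Polynomial K), U.coeff 0 ≠ 0 ∧
      ∀ w m, m ≠ 0 → ∑ i, U.evalEval w (l w i) * l w i ^ m = 0 := by
  obtain ⟨V, hV0, hV⟩ := exists_annihilator_of_eval_eq_sum_pow hS
  obtain ⟨U, hVU, hU⟩ := Polynomial.exists_eq_pow_rootMultiplicity_mul_and_not_dvd V hV0 0
  rw [Polynomial.C_0, sub_zero] at hVU hU
  refine ⟨U, mt Polynomial.X_dvd_iff.2 hU, fun w m hm =>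
    sum_mul_pow_eq_zero_of_consecutive (M := V.rootMultiplicity 0 + 1) (fun k _ => ?_) hm⟩
  rw [← hV w (k + 1) k.succ_ne_zero]
  refine Finset.sum_congr rfl fun i _ => ?_
  conv_rhs => rw [hVU, Polynomial.evalEval_mul, Polynomial.evalEval_pow, Polynomial.evalEval_X]
  ring

end PowerSums

section PowerSumsOfLocallyBoundedTuples

theorem continuous_sum_pow_of_forall_ge {X ι : Type*} [TopologicalSpace X] [Fintype ι]
    {l : X → ι → ℂ} (hl : ∀ x₀, ∃ R : ℝ, ∀ᶠ x in nhds x₀, ‖l x‖ ≤ R) {M : ℕ}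
    (hc : ∀ k, M ≤ k → Continuous fun x => ∑ i, l x i ^ k) {m : ℕ} (hm : m ≠ 0) :
    Continuous fun x => ∑ i, l x i ^ m := by
  -- A limit of `l` along an ultrafilter at `x₀` has the same high power sums as `l x₀`, hence all.
  refine continuous_iff_continuousAt.2 fun x₀ => (Filter.tendsto_iff_ultrafilter _ _ _).2
    fun U hU => ?_
  obtain ⟨R, hR⟩ := hl x₀
  have hmem : ∀ᶠ x in (U : Filter X), l x ∈ Metric.closedBall (0 : ι → ℂ) R :=
    (hR.filter_mono hU).mono fun x hx => mem_closedBall_zero_iff.2 hx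
  obtain ⟨μ, -, hμ : Filter.Tendsto l U (nhds μ)⟩ :=
    (isCompact_closedBall (0 : ι → ℂ) R).ultrafilter_le_nhds (U.map l)
      (Filter.le_principal_iff.2 hmem)
  have hlim : ∀ k, Filter.Tendsto (fun x => ∑ i, l x i ^ k) U (nhds (∑ i, μ i ^ k)) := fun k =>
    tendsto_finsetSum _ fun i _ => (tendsto_pi_nhds.1 hμ i).pow k
  have hμx₀ : ∑ i, l x₀ i ^ m = ∑ i, μ i ^ m := sum_pow_eq_of_forall_ge (fun k hk =>
    tendsto_nhds_unique (((hc k hk).tendsto x₀).mono_left hU) (hlim k)) hm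
  simpa only [hμx₀] using hlim m

theorem differentiable_of_eval_mul {f : ℂ → ℂ} (hf : Continuous f) {b : Polynomial ℂ} (hb : b ≠ 0)
    (hd : Differentiable ℂ fun w => b.eval w * f w) : Differentiable ℂ f := by
  intro w
  refine (Complex.hasFPowerSeriesOnBall_of_differentiable_off_countable (R := 1) (c := w)
    (s := {z | b.IsRoot z}) (Polynomial.finite_setOfPred_isRoot hb).countable hf.continuousOn
    (fun z hz => ?_) one_pos).analyticAt.differentiableAt
  have hz : b.eval z ≠ 0 := hz.2
  refine ((hd z).fun_div b.differentiable.differentiableAt hz).congr_of_eventuallyEq ?_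
  filter_upwards [b.continuous.continuousAt.eventually_ne hz] with y hy
  exact (mul_div_cancel_left₀ _ hy).symm

theorem differentiable_sum_pow_of_eval_eq {ι : Type*} [Fintype ι] {l : ℂ → ι → ℂ}
    (hl : ∀ w₀, ∃ R : ℝ, ∀ᶠ w in nhds w₀, ‖l w‖ ≤ R) {S : ℕ → Polynomial ℂ} {M : ℕ}
    (hS : ∀ k, M ≤ k → ∀ w, (S k).eval w = ∑ i, l w i ^ k) {m : ℕ} (hm : m ≠ 0) :
    Differentiable ℂ fun w => ∑ i, l w i ^ m := by
  have hlarge : ∀ k, M ≤ k → Differentiable ℂ fun w => ∑ i, l w i ^ k := fun k hk => by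
    simpa only [hS k hk] using (S k).differentiable
  obtain ⟨U, hU0, hU⟩ := exists_annihilator_coeff_zero_ne_zero hS
  suffices ∀ n m, m ≠ 0 → M ≤ m + n → Differentiable ℂ fun w => ∑ i, l w i ^ m from
    this M m hm (Nat.le_add_left M m)
  intro n
  induction n with
  | zero => exact fun m _ h => hlarge m h
  | succ n ih =>
    intro m hm h
    refine differentiable_of_eval_mul
      (continuous_sum_pow_of_forall_ge hl (fun k hk => (hlarge k hk).continuous) hm) hU0 ?_
    have hrec : ∀ w, (U.coeff 0).eval w * ∑ i, l w i ^ m = -∑ j ∈ Finset.range U.natDegree,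
        (U.coeff (j + 1)).eval w * ∑ i, l w i ^ (m + (j + 1)) := fun w => by
      have hann := hU w m hm
      rwa [sum_evalEval_mul_pow, Finset.sum_range_succ', add_comm, ← eq_neg_iff_add_eq_zero] at hann
    simp_rw [hrec]
    exact (Differentiable.fun_sum fun j _ =>
      (U.coeff (j + 1)).differentiable.mul (ih _ (by omega) (by omega))).neg

end PowerSumsOfLocallyBoundedTuples

section PolynomialOnLines

variable {E : Type*} [NormedAddCommGroup E] [NormedSpace ℂ E]

/-- The restriction of `f` to every complex line is a polynomial of degree at most `m`, with no
condition on how it depends on the line. -/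
def PolynomialOnLines (m : ℕ) (f : E → ℂ) : Prop :=
  ∀ a b : E, ∃ p : Polynomial ℂ, p.natDegree ≤ m ∧ ∀ w : ℂ, f (a + w • b) = p.eval w

theorem one_add_norm_add_smul_le (a b : E) (w : ℂ) :
    1 + ‖a + w • b‖ ≤ (1 + ‖a‖ + ‖b‖) * (1 + ‖w‖) := by
  have htri := norm_add_le a (w • b)
  rw [norm_smul] at htri
  nlinarith [norm_nonneg a, norm_nonneg b, norm_nonneg w,
    mul_nonneg (norm_nonneg a) (norm_nonneg w)]

theorem PolynomialOnLines.of_norm_le {m : ℕ} {f : E → ℂ}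
    (hd : ∀ a b : E, Differentiable ℂ fun w : ℂ => f (a + w • b)) {K : ℝ}
    (hK : ∀ z, ‖f z‖ ≤ K * (1 + ‖z‖) ^ m) : PolynomialOnLines m f := by
  have hK0 : 0 ≤ K := by simpa using (norm_nonneg _).trans (hK 0)
  refine fun a b => exists_polynomial_of_norm_le_rpow (hd a b) (K := K * (1 + ‖a‖ + ‖b‖) ^ m)
    (α := m) (by linarith) fun w => (hK _).trans ?_
  rw [Real.rpow_natCast, mul_assoc, ← mul_pow]
  gcongr
  exact one_add_norm_add_smul_le a b w

namespace PolynomialOnLines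

variable {m n : ℕ} {f g : E → ℂ}

theorem differentiable (hf : PolynomialOnLines m f) (a b : E) :
    Differentiable ℂ fun w : ℂ => f (a + w • b) := by
  obtain ⟨p, -, hp⟩ := hf a b
  simpa only [hp] using p.differentiable

theorem mono (hf : PolynomialOnLines m f) (h : m ≤ n) : PolynomialOnLines n f := fun a b =>
  let ⟨p, hpm, hp⟩ := hf a b
  ⟨p, hpm.trans h, hp⟩

theorem const_mul (c : ℂ) (hf : PolynomialOnLines m f) : PolynomialOnLines m fun z => c * f z :=
  fun a b =>
    let ⟨p, hpm, hp⟩ := hf a b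
    ⟨Polynomial.C c * p, (Polynomial.natDegree_C_mul_le c p).trans hpm, fun w => by simp [hp]⟩

theorem sum {κ : Type*} {s : Finset κ} {f : κ → E → ℂ}
    (hf : ∀ k ∈ s, PolynomialOnLines m (f k)) : PolynomialOnLines m fun z => ∑ k ∈ s, f k z := by
  intro a b
  choose! p hpm hp using fun k hk => hf k hk a b
  exact ⟨∑ k ∈ s, p k, Polynomial.natDegree_sum_le_of_forall_le _ _ hpm, fun w => by
    rw [Polynomial.eval_finsetSum]
    exact Finset.sum_congr rfl fun k hk => hp k hk w⟩

theorem add (hf : PolynomialOnLines m f) (hg : PolynomialOnLines m g) :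
    PolynomialOnLines m fun z => f z + g z := fun a b =>
  let ⟨p, hpm, hp⟩ := hf a b
  let ⟨q, hqm, hq⟩ := hg a b
  ⟨p + q, Polynomial.natDegree_add_le_of_degree_le hpm hqm, fun w => by simp [hp, hq]⟩

theorem comp_add_right (hf : PolynomialOnLines m f) (c : E) :
    PolynomialOnLines m fun z => f (z + c) := fun a b =>
  let ⟨p, hpm, hp⟩ := hf (a + c) b
  ⟨p, hpm, fun w => by simp only [← hp, add_right_comm]⟩

end PolynomialOnLines

end PolynomialOnLines

section CircleIntegral

theorem aestronglyMeasurable_deriv_of_eventually {X 𝕜 E : Type*} [MeasurableSpace X] {μ : Measure X}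
    [NontriviallyNormedField 𝕜] [NormedAddCommGroup E] [NormedSpace 𝕜 E] {F : X → 𝕜 → E} {w₀ : 𝕜}
    (hd : ∀ᵐ x ∂μ, DifferentiableAt 𝕜 (F x) w₀)
    (hF : ∀ᶠ w in nhds w₀, AEStronglyMeasurable (fun x => F x w) μ) :
    AEStronglyMeasurable (fun x => deriv (F x) w₀) μ := by
  obtain ⟨w, hw, hFw⟩ := Filter.exists_seq_forall_of_frequently
    (hF.filter_mono (nhdsWithin_le_nhds (s := {w₀}ᶜ))).frequently
  refine aestronglyMeasurable_of_tendsto_ae Filter.atTop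
    (f := fun n x => (w n - w₀)⁻¹ • (F x (w n) - F x w₀))
    (fun n => ((hFw n).sub hF.self_of_nhds).const_smul _) (hd.mono fun x hx => ?_)
  exact hx.hasDerivAt.tendsto_slope.comp hw

variable {E : Type*} [NormedAddCommGroup E] [NormedSpace ℂ E]

theorem norm_deriv_le_of_mem_ball_half {g : ℂ → E} {w₀ w : ℂ} {ε M : ℝ}
    (hg : DifferentiableOn ℂ g (Metric.closedBall w₀ ε))
    (hM : ∀ z ∈ Metric.closedBall w₀ ε, ‖g z‖ ≤ M) (hw : w ∈ Metric.ball w₀ (ε / 2)) :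
    ‖deriv g w‖ ≤ M / (ε / 2) := by
  have hsub : Metric.closedBall w (ε / 2) ⊆ Metric.closedBall w₀ ε :=
    Metric.closedBall_subset_closedBall' (by linarith [Metric.mem_ball.1 hw])
  exact Complex.norm_deriv_le_of_forall_mem_sphere_norm_le (Metric.pos_of_mem_ball hw)
    (hg.mono (Metric.closure_ball_subset_closedBall.trans hsub)).diffContOnCl
    fun z hz => hM z (hsub (Metric.sphere_subset_closedBall hz))

theorem differentiableOn_circleIntegral {F : ℂ → ℂ → E} {c : ℂ} {R : ℝ} (hR : 0 ≤ R)
    {s : Set ℂ} (hs : IsOpen s)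
    (hc : ContinuousOn (Function.uncurry F) (Metric.sphere c R ×ˢ s))
    (hd : ∀ ζ ∈ Metric.sphere c R, DifferentiableOn ℂ (F ζ) s) :
    DifferentiableOn ℂ (fun w => ∮ ζ in C(c, R), F ζ w) s := by
  intro w₀ hw₀
  obtain ⟨ε, hε, hball⟩ := Metric.nhds_basis_closedBall.mem_iff.1 (hs.mem_nhds hw₀)
  obtain ⟨M, hM⟩ := ((isCompact_sphere c R).prod (isCompact_closedBall w₀ ε))
    |>.exists_bound_of_continuousOn (hc.mono (Set.prod_mono_right hball))
  have hζ : ∀ θ, circleMap c R θ ∈ Metric.sphere c R := circleMap_mem_sphere c hR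
  have hcont : ∀ w ∈ s, Continuous fun θ => deriv (circleMap c R) θ • F (circleMap c R θ) w :=
    fun w hw => by
      have hFw : Continuous fun θ => F (circleMap c R θ) w :=
        hc.comp_continuous ((continuous_circleMap c R).prodMk continuous_const)
          fun θ => ⟨hζ θ, hw⟩
      simp only [deriv_circleMap]
      exact ((continuous_circleMap 0 R).mul continuous_const).smul hFw
  have hmeas : ∀ᶠ w in nhds w₀, AEStronglyMeasurable
      (fun θ => deriv (circleMap c R) θ • F (circleMap c R θ) w)
      (volume.restrict (Set.uIoc 0 (2 * π))) :=
    (hs.eventually_mem hw₀).mono fun w hw => (hcont w hw).aestronglyMeasurable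
  have hdiff : ∀ θ, ∀ w ∈ s,
      DifferentiableAt ℂ (fun w => deriv (circleMap c R) θ • F (circleMap c R θ) w) w :=
    fun θ w hw => ((hd _ (hζ θ)).differentiableAt (hs.mem_nhds hw)).const_smul _
  refine (intervalIntegral.hasDerivAt_integral_of_dominated_loc_of_deriv_le
    (bound := fun _ => R * M / (ε / 2)) (Metric.ball_mem_nhds w₀ (half_pos hε)) hmeas
    ((hcont w₀ hw₀).intervalIntegrable _ _)
    (aestronglyMeasurable_deriv_of_eventually (.of_forall fun θ => hdiff θ w₀ hw₀) hmeas)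
    (.of_forall fun θ _ w hw => ?_) intervalIntegrable_const
    (.of_forall fun θ _ w hw => (hdiff θ w (hball ?_)).hasDerivAt)).2.differentiableAt
      |>.differentiableWithinAt
  · refine norm_deriv_le_of_mem_ball_half
      (fun z hz => (hdiff θ z (hball hz)).differentiableWithinAt) (fun z hz => ?_) hw
    rw [norm_smul, deriv_circleMap, norm_mul, norm_circleMap_zero, norm_I, mul_one,
      abs_of_nonneg hR]
    exact mul_le_mul_of_nonneg_left (hM (_, z) ⟨hζ θ, hz⟩) hR
  · exact Metric.ball_subset_closedBall (Metric.ball_subset_ball (by linarith) hw)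

end CircleIntegral

section HomogeneousParts

variable {E : Type*} [NormedAddCommGroup E] [NormedSpace ℂ E]

/-- The homogeneous part of degree `k` of the Taylor expansion of `f` at the origin, defined as the
`k`-th Taylor coefficient of `f` along the line spanned by `z`. -/
noncomputable def homogeneousPart (k : ℕ) (f : E → ℂ) (z : E) : ℂ :=
  iteratedDeriv k (fun t : ℂ => f (t • z)) 0 / k.factorial

variable {f : E → ℂ} {δ : ℝ}

theorem div_one_add_mul_self_lt (hδ : 0 < δ) {x : ℝ} (hx : 0 ≤ x) : δ / (1 + x) * x < δ := by
  rw [div_mul_eq_mul_div, div_lt_iff₀ (by positivity)]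
  linarith

theorem smul_mem_ball_zero {r : ℝ} {z : E} (hr : r * ‖z‖ < δ) {t : ℂ}
    (ht : t ∈ Metric.closedBall 0 r) : t • z ∈ Metric.ball (0 : E) δ := by
  rw [mem_ball_zero_iff, norm_smul]
  exact (mul_le_mul_of_nonneg_right (mem_closedBall_zero_iff.1 ht) (norm_nonneg z)).trans_lt hr

theorem differentiableOn_comp_smul (hf : DifferentiableOn ℂ f (Metric.ball 0 δ)) {r : ℝ} {z : E}
    (hr : r * ‖z‖ < δ) : DifferentiableOn ℂ (fun t : ℂ => f (t • z)) (Metric.closedBall 0 r) :=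
  hf.comp (by fun_prop) fun _ => smul_mem_ball_zero hr

theorem homogeneousPart_eq_circleIntegral (hf : DifferentiableOn ℂ f (Metric.ball 0 δ)) (k : ℕ)
    {r : ℝ} (hr0 : 0 < r) {z : E} (hr : r * ‖z‖ < δ) :
    homogeneousPart k f z =
      (2 * π * I)⁻¹ * ∮ ζ in C(0, r), 1 / (ζ - 0) ^ (k + 1) * f (ζ • z) := by
  have hcauchy :=
    (differentiableOn_comp_smul hf hr).circleIntegral_one_div_sub_center_pow_smul hr0 k
  simp only [smul_eq_mul] at hcauchy
  have : (2 * π * I : ℂ) ≠ 0 := Complex.two_pi_I_ne_zero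
  rw [hcauchy, homogeneousPart]
  field_simp

theorem differentiable_homogeneousPart (hδ : 0 < δ) (hf : DifferentiableOn ℂ f (Metric.ball 0 δ))
    (k : ℕ) (a b : E) : Differentiable ℂ fun w : ℂ => homogeneousPart k f (a + w • b) := by
  intro w₀
  set r := δ / (1 + ‖a + w₀ • b‖)
  have hr0 : 0 < r := by positivity
  set s := {w : ℂ | r * ‖a + w • b‖ < δ}
  have hs : IsOpen s := isOpen_lt (by fun_prop) continuous_const
  have hw₀ : w₀ ∈ s := div_one_add_mul_self_lt hδ (norm_nonneg _)
  have hf' : DifferentiableOn ℂ (fun p : ℂ × ℂ => f (p.1 • (a + p.2 • b)))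
      (Metric.sphere 0 r ×ˢ s) :=
    hf.comp (by fun_prop) fun p hp =>
      smul_mem_ball_zero hp.2 (Metric.sphere_subset_closedBall hp.1)
  have hint : DifferentiableOn ℂ
      (fun w => ∮ ζ in C(0, r), 1 / (ζ - 0) ^ (k + 1) * f (ζ • (a + w • b))) s := by
    refine differentiableOn_circleIntegral hr0.le hs (ContinuousOn.mul ?_ hf'.continuousOn)
      fun ζ hζ => DifferentiableOn.const_mul ?_ _
    · refine continuousOn_const.div (by fun_prop) fun p hp => pow_ne_zero _ ?_
      rw [sub_zero]
      exact ne_zero_of_mem_sphere hr0.ne' ⟨p.1, hp.1⟩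
    · exact hf'.comp (f := fun w => (ζ, w)) (by fun_prop) fun w hw => ⟨hζ, hw⟩
  refine ((hint.const_mul (2 * π * I)⁻¹).differentiableAt
    (hs.mem_nhds hw₀)).congr_of_eventuallyEq ?_
  filter_upwards [hs.mem_nhds hw₀] with w hw
  exact homogeneousPart_eq_circleIntegral hf k hr0 hw

theorem norm_homogeneousPart_le (hδ : 0 < δ) (hf : DifferentiableOn ℂ f (Metric.ball 0 δ)) {B : ℝ}
    (hB : ∀ z ∈ Metric.ball 0 δ, ‖f z‖ ≤ B) (k : ℕ) (z : E) :
    ‖homogeneousPart k f z‖ ≤ B / δ ^ k * (1 + ‖z‖) ^ k := by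
  have hr := div_one_add_mul_self_lt hδ (norm_nonneg z)
  have hcauchy := Complex.norm_iteratedDeriv_le_of_forall_mem_sphere_norm_le (C := B) k
    (show 0 < δ / (1 + ‖z‖) by positivity)
    ((differentiableOn_comp_smul hf hr).mono Metric.closure_ball_subset_closedBall).diffContOnCl
    fun t ht => hB _ (smul_mem_ball_zero hr (Metric.sphere_subset_closedBall ht))
  rw [homogeneousPart, norm_div, Complex.norm_natCast, div_le_iff₀ (by positivity)]
  refine hcauchy.trans_eq ?_
  rw [div_pow]
  field_simp

theorem polynomialOnLines_homogeneousPart (hδ : 0 < δ)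
    (hf : DifferentiableOn ℂ f (Metric.ball 0 δ)) {B : ℝ} (hB : ∀ z ∈ Metric.ball 0 δ, ‖f z‖ ≤ B)
    (k : ℕ) : PolynomialOnLines k (homogeneousPart k f) :=
  .of_norm_le (differentiable_homogeneousPart hδ hf k) (norm_homogeneousPart_le hδ hf hB k)

end HomogeneousParts

section LogarithmOfFactorization

theorem iteratedDeriv_eval_zero_div_factorial (q : Polynomial ℂ) (k : ℕ) :
    iteratedDeriv k (fun t => q.eval t) 0 / k.factorial = q.coeff k := by
  have hiter : ∀ k, iteratedDeriv k (fun t => q.eval t) =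
      fun t => (Polynomial.derivative^[k] q).eval t := fun k => by
    induction k with
    | zero => rfl
    | succ k ih =>
      funext t
      rw [iteratedDeriv_succ, ih, Polynomial.deriv, Function.iterate_succ_apply']
  simp only [hiter]
  rw [← Polynomial.coeff_zero_eq_eval_zero, Polynomial.coeff_iterate_derivative, zero_add,
    Nat.descFactorial_self, nsmul_eq_mul, mul_div_cancel_left₀]
  exact_mod_cast k.factorial_ne_zero

theorem analyticAt_log_one_sub_mul (c : ℂ) :
    AnalyticAt ℂ (fun t => Complex.log (1 - c * t)) 0 := by
  refine AnalyticAt.clog (by fun_prop) ?_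
  simp

theorem iteratedDeriv_log_one_sub_mul_div_factorial (c : ℂ) {k : ℕ} (hk : k ≠ 0) :
    iteratedDeriv k (fun t => Complex.log (1 - c * t)) 0 / k.factorial = -(c ^ k / k) := by
  obtain ⟨n, rfl⟩ := Nat.exists_eq_add_one_of_ne_zero hk
  have hderiv : deriv (fun t => Complex.log (1 - c * t)) =ᶠ[nhds 0]
      fun t => -c * (-c * t + 1)⁻¹ := by
    have hslit : ∀ᶠ t in nhds (0 : ℂ), 1 - c * t ∈ slitPlane :=
      (show Continuous fun t => 1 - c * t by fun_prop).continuousAt.eventually_mem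
        (isOpen_slitPlane.mem_nhds (by simp))
    filter_upwards [hslit] with t ht
    have hlin : HasDerivAt (fun t => 1 - c * t) (-c) t := by
      simpa using ((hasDerivAt_id t).const_mul c).const_sub 1
    rw [(hlin.clog ht).deriv, div_eq_mul_inv, neg_mul c t, neg_add_eq_sub]
  rw [iteratedDeriv_succ', hderiv.iteratedDeriv_eq, iteratedDeriv_const_mul_field,
    iteratedDeriv_eq_iterate, iter_deriv_inv_linear, Nat.factorial_succ]
  have hfac : (n.factorial : ℂ) ≠ 0 := by exact_mod_cast n.factorial_ne_zero
  have hsign : (-1 : ℂ) ^ n * (-c) ^ n = c ^ n := by rw [← mul_pow, neg_one_mul, neg_neg]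
  simp only [mul_zero, zero_add, one_zpow, mul_one, Nat.cast_mul, mul_right_comm _ _ ((-c) ^ n),
    hsign]
  field_simp
  ring

variable {ι : Type*} [Fintype ι] {f : ℂ → ℂ} {l : ι → ℂ} {q : Polynomial ℂ}

theorem log_eventuallyEq_sum_log_add (hq0 : q.eval 0 = 0)
    (hf : ∀ t, f t = (∏ i, (1 - l i * t)) * Complex.exp (q.eval t)) :
    (fun t => Complex.log (f t)) =ᶠ[nhds 0]
      fun t => ∑ i, Complex.log (1 - l i * t) + q.eval t := by
  set g : ℂ → ℂ := fun t => ∑ i, Complex.log (1 - l i * t) + q.eval t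
  have hg : ContinuousAt (fun t => (g t).im) 0 :=
    Complex.continuous_im.continuousAt.comp ((tendsto_finsetSum _ fun i _ =>
      (analyticAt_log_one_sub_mul (l i)).continuousAt).add q.continuous.continuousAt)
  have hg0 : (g 0).im = 0 := by simp [g, hq0]
  have hne : ∀ᶠ t in nhds (0 : ℂ), ∀ i, 1 - l i * t ≠ 0 :=
    Filter.eventually_all.2 fun i => ContinuousAt.eventually_ne (by fun_prop) (by simp)
  filter_upwards [hne, hg.eventually_mem (Ioo_mem_nhds (hg0 ▸ neg_lt_zero.2 Real.pi_pos)
    (hg0 ▸ Real.pi_pos))] with t ht him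
  rw [← Complex.log_exp him.1 him.2.le, hf, Complex.exp_add, Complex.exp_sum]
  simp only [Complex.exp_log (ht _)]

theorem iteratedDeriv_log_div_factorial (hq0 : q.eval 0 = 0)
    (hf : ∀ t, f t = (∏ i, (1 - l i * t)) * Complex.exp (q.eval t)) {k : ℕ} (hk : k ≠ 0) :
    iteratedDeriv k (fun t => Complex.log (f t)) 0 / k.factorial =
      q.coeff k - (∑ i, l i ^ k) / k := by
  have hlog : ∀ i ∈ Finset.univ, ContDiffAt ℂ k (fun t => Complex.log (1 - l i * t)) 0 :=
    fun i _ => (analyticAt_log_one_sub_mul (l i)).contDiffAt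
  rw [(log_eventuallyEq_sum_log_add hq0 hf).iteratedDeriv_eq,
    iteratedDeriv_fun_add (ContDiffAt.sum hlog) q.differentiable.contDiff.contDiffAt,
    iteratedDeriv_fun_sum hlog, add_div, Finset.sum_div, iteratedDeriv_eval_zero_div_factorial]
  simp only [iteratedDeriv_log_one_sub_mul_div_factorial _ hk, Finset.sum_neg_distrib,
    Finset.sum_div]
  ring

end LogarithmOfFactorization

section LinesThroughOrigin

variable {ι : Type*} [Fintype ι]

theorem norm_prod_one_sub_le (l : ι → ℂ) : ‖∏ i, (1 - l i)‖ ≤ (1 + ‖l‖) ^ Fintype.card ι := by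
  rw [norm_prod, ← Finset.card_univ, ← Finset.prod_const]
  refine Finset.prod_le_prod (fun _ _ => norm_nonneg _) fun i _ => (norm_sub_le _ _).trans ?_
  rw [norm_one]
  exact add_le_add_right (norm_le_pi_norm l i) 1

variable {E : Type*} [NormedAddCommGroup E] [NormedSpace ℂ E]

theorem polynomialOnLines_sum_pow {l : E → ι → ℂ} {K : ℝ} (hl : ∀ z, ‖l z‖ ≤ K * (1 + ‖z‖))
    {M : ℕ} (hS : ∀ k, M ≤ k → PolynomialOnLines k fun z => ∑ i, l z i ^ k) {k : ℕ} (hk : k ≠ 0) :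
    PolynomialOnLines k fun z => ∑ i, l z i ^ k := by
  refine .of_norm_le (K := Fintype.card ι * K ^ k) (fun a b => ?_) fun z => ?_
  · choose! S hS using fun k hk => hS k hk a b
    refine differentiable_sum_pow_of_eval_eq (l := fun w => l (a + w • b)) (fun w₀ => ?_)
      (fun k hk w => ((hS k hk).2 w).symm) hk
    have hcont : Continuous fun w : ℂ => K * (1 + ‖a + w • b‖) := by fun_prop
    refine ⟨K * (1 + ‖a + w₀ • b‖) + 1, ?_⟩
    filter_upwards [hcont.continuousAt.eventually_lt_const (lt_add_one _)] with w hw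
    exact (hl _).trans hw.le
  · calc ‖∑ i, l z i ^ k‖ ≤ ∑ i, ‖l z i‖ ^ k := (norm_sum_le _ _).trans_eq (by simp only [norm_pow])
      _ ≤ ∑ _i : ι, (K * (1 + ‖z‖)) ^ k := by
        gcongr with i
        exact (norm_le_pi_norm _ i).trans (hl z)
      _ = Fintype.card ι * K ^ k * (1 + ‖z‖) ^ k := by simp [mul_pow, mul_assoc]

theorem exists_ball_norm_log_le {ψ : E → ℂ} (hψ : Differentiable ℂ ψ) (h0 : ψ 0 = 1) :
    ∃ δ > 0, DifferentiableOn ℂ (fun z => Complex.log (ψ z)) (Metric.ball 0 δ) ∧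
      ∀ z ∈ Metric.ball 0 δ, ψ z ≠ 0 ∧ ‖Complex.log (ψ z)‖ ≤ 1 := by
  have hslit : ψ 0 ∈ slitPlane := h0 ▸ one_mem_slitPlane
  have hlog : ∀ᶠ z in nhds 0, ‖Complex.log (ψ z)‖ < 1 :=
    ((hψ.continuous.continuousAt.clog hslit).norm).eventually_lt_const (by simp [h0])
  obtain ⟨δ, hδ, hball⟩ := Metric.eventually_nhds_iff_ball.1
    (hlog.and (hψ.continuous.continuousAt.eventually_mem (isOpen_slitPlane.mem_nhds hslit)))
  exact ⟨δ, hδ, fun z hz => ((hψ z).clog (hball z hz).2).differentiableWithinAt,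
    fun z hz => ⟨slitPlane_ne_zero (hball z hz).2, (hball z hz).1.le⟩⟩

variable {ψ : E → ℂ} {l : E → ι → ℂ} {q : E → Polynomial ℂ}

theorem norm_le_of_ne_zero_on_ball {δ : ℝ} (hδ : 0 < δ) (hne : ∀ z ∈ Metric.ball 0 δ, ψ z ≠ 0)
    (hψ : ∀ z (t : ℂ), ψ (t • z) = (∏ i, (1 - l z i * t)) * Complex.exp ((q z).eval t)) (z : E) :
    ‖l z‖ ≤ δ⁻¹ * (1 + ‖z‖) := by
  refine (pi_norm_le_iff_of_nonneg (by positivity)).2 fun i => ?_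
  rcases eq_or_ne (l z i) 0 with hi | hi
  · rw [hi, norm_zero]
    positivity
  have hzero : ψ ((l z i)⁻¹ • z) = 0 := by
    rw [hψ, Finset.prod_eq_zero (Finset.mem_univ i) (by rw [mul_inv_cancel₀ hi, sub_self]),
      zero_mul]
  have hfar : δ ≤ ‖(l z i)⁻¹ • z‖ := by
    by_contra! hnear
    exact hne _ (mem_ball_zero_iff.2 hnear) hzero
  rw [norm_smul, norm_inv, inv_mul_eq_div, le_div_iff₀ (norm_pos_iff.2 hi)] at hfar
  rw [inv_mul_eq_div, le_div_iff₀ hδ]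
  linarith

theorem polynomialOnLines_eval_one {m : ℕ} (hq : ∀ z, (q z).natDegree ≤ m)
    (hq0 : ∀ z, (q z).eval 0 = 0) (hcoeff : ∀ k ≠ 0, PolynomialOnLines k fun z => (q z).coeff k) :
    PolynomialOnLines m fun z => (q z).eval 1 := by
  have hsplit : ∀ z, (q z).eval 1 = ∑ k ∈ Finset.range m, (q z).coeff (k + 1) := fun z => by
    rw [Polynomial.eval_eq_sum_range' (Nat.lt_succ_of_le (hq z)), Finset.sum_range_succ',
      Polynomial.coeff_zero_eq_eval_zero, hq0]
    simp
  simp only [hsplit]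
  exact .sum fun k hk => (hcoeff _ k.succ_ne_zero).mono (Finset.mem_range.1 hk)

theorem exists_polynomialOnLines_mul_exp (hψ : Differentiable ℂ ψ) (h0 : ψ 0 = 1) {m : ℕ}
    (hq : ∀ z, (q z).natDegree ≤ m) (hq0 : ∀ z, (q z).eval 0 = 0)
    (hfac : ∀ z (t : ℂ), ψ (t • z) = (∏ i, (1 - l z i * t)) * Complex.exp ((q z).eval t)) :
    ∃ P Q : E → ℂ, PolynomialOnLines (Fintype.card ι) P ∧ PolynomialOnLines m Q ∧
      ∀ z, ψ z = P z * Complex.exp (Q z) := by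
  obtain ⟨δ, hδ, hlog, hball⟩ := exists_ball_norm_log_le hψ h0
  have hl := norm_le_of_ne_zero_on_ball hδ (fun z hz => (hball z hz).1) hfac
  have hpart := polynomialOnLines_homogeneousPart hδ hlog fun z hz => (hball z hz).2
  have hpart_eq : ∀ k ≠ 0, ∀ z, homogeneousPart k (fun z => Complex.log (ψ z)) z =
      (q z).coeff k - (∑ i, l z i ^ k) / k := fun k hk z =>
    iteratedDeriv_log_div_factorial (hq0 z) (hfac z) hk
  have hsum : ∀ k ≠ 0, PolynomialOnLines k fun z => ∑ i, l z i ^ k := fun k hk => by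
    refine polynomialOnLines_sum_pow hl (M := m + 1) (fun k hk => ?_) hk
    convert (hpart k).const_mul (-k : ℂ) using 2 with z
    have hk0 : k ≠ 0 := by omega
    rw [hpart_eq k hk0, Polynomial.coeff_eq_zero_of_natDegree_lt ((hq z).trans_lt hk)]
    field_simp
    ring
  have hcoeff : ∀ k ≠ 0, PolynomialOnLines k fun z => (q z).coeff k := fun k hk => by
    convert (hpart k).add ((hsum k hk).const_mul (k : ℂ)⁻¹) using 2 with z
    rw [hpart_eq k hk]
    ring
  have hQ := polynomialOnLines_eval_one hq hq0 hcoeff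
  have hfac_one : ∀ z, ψ z = (∏ i, (1 - l z i)) * Complex.exp ((q z).eval 1) := fun z => by
    simpa using hfac z 1
  refine ⟨_, _, .of_norm_le (K := (1 + δ⁻¹) ^ Fintype.card ι) (fun a b => ?_) fun z => ?_, hQ,
    hfac_one⟩
  swap
  · refine (norm_prod_one_sub_le (l z)).trans ?_
    rw [← mul_pow]
    gcongr
    linarith [hl z, norm_nonneg z]
  have hdiv : ∀ z, ∏ i, (1 - l z i) = ψ z * Complex.exp (-(q z).eval 1) := fun z => by
    rw [hfac_one, mul_assoc, ← Complex.exp_add, add_neg_cancel, Complex.exp_zero, mul_one]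
  simp only [hdiv]
  exact (hψ.comp (by fun_prop)).mul (hQ.differentiable a b).neg.cexp

end LinesThroughOrigin


section MvPolynomial

variable {R σ : Type*}

theorem eval_smul_of_isHomogeneous [CommSemiring R] {P : MvPolynomial σ R} {k : ℕ}
    (hP : P.IsHomogeneous k) (t : R) (x : σ → R) : eval (t • x) P = t ^ k * eval x P := by
  rw [eval_eq, eval_eq, Finset.mul_sum]
  refine Finset.sum_congr rfl fun e he => ?_
  have hdeg : ∑ i ∈ e.support, e i = k := by
    rw [← Finsupp.degree_apply, ← hP (mem_support_iff.1 he), Finsupp.degree_eq_weight_one]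
    rfl
  simp only [Pi.smul_apply, smul_eq_mul, mul_pow, Finset.prod_mul_distrib,
    Finset.prod_pow_eq_pow_sum, hdeg]
  ring

theorem eq_sum_eval_homogeneousComponent [CommRing R] [IsDomain R] [Infinite R]
    {P : MvPolynomial σ R} {x : σ → R} {p : Polynomial R}
    (hp : ∀ t, eval (t • x) P = p.eval t) :
    p = ∑ k ∈ Finset.range (P.totalDegree + 1),
      Polynomial.C (eval x (homogeneousComponent k P)) * Polynomial.X ^ k := by
  refine Polynomial.funext fun t => ?_
  rw [← hp, Polynomial.eval_finsetSum]
  conv_lhs => rw [← sum_homogeneousComponent P, map_sum]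
  refine Finset.sum_congr rfl fun k _ => ?_
  rw [eval_smul_of_isHomogeneous (homogeneousComponent_isHomogeneous k P), Polynomial.eval_mul,
    Polynomial.eval_C, Polynomial.eval_pow, Polynomial.eval_X, mul_comm]

theorem totalDegree_le_of_eval_smul [CommRing R] [IsDomain R] [Infinite R]
    {P : MvPolynomial σ R} {m : ℕ}
    (hP : ∀ x, ∃ p : Polynomial R, p.natDegree ≤ m ∧ ∀ t, eval (t • x) P = p.eval t) :
    P.totalDegree ≤ m := by
  rw [← sum_homogeneousComponent P]
  refine totalDegree_finsetSum_le fun k hk => ?_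
  rcases le_or_gt k m with hkm | hmk
  · exact (homogeneousComponent_isHomogeneous k P).totalDegree_le.trans hkm
  suffices hzero : homogeneousComponent k P = 0 by simp [hzero]
  refine MvPolynomial.funext fun x => ?_
  obtain ⟨p, hpm, hp⟩ := hP x
  have hcoeff : p.coeff k = 0 := Polynomial.coeff_eq_zero_of_natDegree_lt (hpm.trans_lt hmk)
  rw [eq_sum_eval_homogeneousComponent hp, Polynomial.finsetSum_coeff] at hcoeff
  simpa only [Polynomial.coeff_C_mul_X_pow, Finset.sum_ite_eq, if_pos hk, map_zero] using hcoeff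

theorem eval_aeval_X [CommSemiring R] (x : σ → R) (i : σ) (p : Polynomial R) :
    eval x (Polynomial.aeval (X i) p) = p.eval (x i) := by
  rw [← MvPolynomial.coe_aeval_eq_eval, RingHom.coe_coe, ← Polynomial.aeval_algHom_apply, aeval_X,
    Polynomial.coe_aeval_eq_eval]

theorem eval_eq_sum_lagrange_basis [Field R] [CharZero R] {p : Polynomial R} {m : ℕ}
    (hp : p.natDegree ≤ m) (t : R) :
    p.eval t = ∑ j ∈ Finset.range (m + 1), p.eval (j : R) *
      (Lagrange.basis (Finset.range (m + 1)) (fun j : ℕ => (j : R)) j).eval t := by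
  have hdeg : p.degree < (Finset.range (m + 1)).card := by
    rw [Finset.card_range]
    exact Polynomial.degree_le_natDegree.trans_lt (by exact_mod_cast Nat.lt_succ_of_le hp)
  conv_lhs => rw [Lagrange.eq_interpolate Nat.cast_injective.injOn hdeg, Lagrange.interpolate_apply]
  simp only [Polynomial.eval_finsetSum, Polynomial.eval_mul, Polynomial.eval_C]

variable {E ι : Type*} [NormedAddCommGroup E] [NormedSpace ℂ E] {m : ℕ}

theorem PolynomialOnLines.exists_mvPolynomial_eval_eq_sum_smul (v : ι → E) (s : Finset ι)
    {f : E → ℂ} (hf : PolynomialOnLines m f) :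
    ∃ P : MvPolynomial ι ℂ, ∀ x : ι → ℂ, f (∑ i ∈ s, x i • v i) = eval x P := by
  classical
  induction s using Finset.induction generalizing f with
  | empty => exact ⟨C (f 0), fun x => by simp⟩
  | insert i s his ih =>
    choose P hP using fun j : ℕ => ih (hf.comp_add_right ((j : ℂ) • v i))
    refine ⟨∑ j ∈ Finset.range (m + 1), P j * Polynomial.aeval (X i)
      (Lagrange.basis (Finset.range (m + 1)) (fun j : ℕ => (j : ℂ)) j), fun x => ?_⟩
    obtain ⟨p, hpm, hp⟩ := hf (∑ i ∈ s, x i • v i) (v i)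
    rw [Finset.sum_insert his, add_comm, hp, eval_eq_sum_lagrange_basis hpm, map_sum]
    simp only [map_mul, eval_aeval_X, ← hP, hp]

theorem PolynomialOnLines.exists_mvPolynomial [Finite ι] (b : Module.Basis ι ℂ E) {f : E → ℂ}
    (hf : PolynomialOnLines m f) :
    ∃ P : MvPolynomial ι ℂ, P.totalDegree ≤ m ∧ ∀ z, f z = eval (b.repr z) P := by
  cases nonempty_fintype ι
  obtain ⟨P, hP⟩ := hf.exists_mvPolynomial_eval_eq_sum_smul b Finset.univ
  refine ⟨P, totalDegree_le_of_eval_smul fun x => ?_, fun z => ?_⟩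
  · obtain ⟨p, hpm, hp⟩ := hf 0 (∑ i, x i • b i)
    refine ⟨p, hpm, fun t => ?_⟩
    simp only [← hP, ← hp, zero_add, Finset.smul_sum, Pi.smul_apply, smul_assoc]
  · rw [← hP, b.sum_repr]

end MvPolynomial

section FactorizationThroughPoint

variable {E : Type*} [NormedAddCommGroup E] [NormedSpace ℂ E] {m N : ℕ} {ρ A C : ℝ}

theorem norm_add_smul_le_of_growth (hρ0 : 0 ≤ ρ) {φ : E → ℂ}
    (hgrowth : ∀ z, ‖φ z‖ ≤ C * Real.exp (A * ‖z‖ ^ ρ)) (a z : E) (t : ℂ) :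
    ‖φ (a + t • z)‖ ≤ C * Real.exp (|A| * (1 + ‖a‖ + ‖z‖) ^ ρ * (1 + ‖t‖) ^ ρ) := by
  have hC : 0 ≤ C := nonneg_of_mul_nonneg_left ((norm_nonneg _).trans (hgrowth 0)) (Real.exp_pos _)
  refine (hgrowth _).trans ?_
  rw [mul_assoc, ← Real.mul_rpow (by positivity) (by positivity)]
  have hle : ‖a + t • z‖ ≤ (1 + ‖a‖ + ‖z‖) * (1 + ‖t‖) := by
    linarith [one_add_norm_add_smul_le a z t]
  gcongr
  exact le_abs_self A

theorem exists_prod_mul_exp_on_line (hρ0 : 0 ≤ ρ) (hρ : ρ < m + 1) {φ : E → ℂ}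
    (hgrowth : ∀ z, ‖φ z‖ ≤ C * Real.exp (A * ‖z‖ ^ ρ)) {a : E} (ha : φ a ≠ 0)
    (hlines : ∀ z ≠ 0, ∃ (p : Polynomial ℂ) (h : ℂ → ℂ), p.natDegree ≤ N ∧ Differentiable ℂ h ∧
      (∀ t, h t ≠ 0) ∧ ∀ t, φ (a + t • z) = p.eval t * h t) (z : E) :
    ∃ (l : Fin N → ℂ) (q : Polynomial ℂ), q.natDegree ≤ m ∧ q.eval 0 = 0 ∧
      ∀ t : ℂ, (φ a)⁻¹ * φ (a + t • z) = (∏ i, (1 - l i * t)) * Complex.exp (q.eval t) := by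
  rcases eq_or_ne z 0 with rfl | hz
  · exact ⟨0, 0, by simp, by simp, fun t => by simp [ha]⟩
  obtain ⟨p, h, hp, hd, hne, hfac⟩ := hlines z hz
  refine exists_eq_prod_mul_exp (p := p) (h := fun t => (φ a)⁻¹ * h t) (K := ‖(φ a)⁻¹‖ * C)
    (A := |A| * (1 + ‖a‖ + ‖z‖) ^ ρ) ?_ (by positivity) hρ0 hρ (fun t => ?_) hp
    (hd.const_mul _) (fun t => mul_ne_zero (inv_ne_zero ha) (hne t)) fun t => ?_
  · rw [zero_smul, add_zero, inv_mul_cancel₀ ha]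
  · rw [norm_mul, mul_assoc]
    gcongr
    exact norm_add_smul_le_of_growth hρ0 hgrowth a z t
  · rw [hfac, mul_left_comm]

end FactorizationThroughPoint

end FewZeros

theorem entire_order_two_few_zeros_general {E ι : Type*} [NormedAddCommGroup E] [NormedSpace ℂ E]
    [Finite ι] (b : Module.Basis ι ℂ E) {m N : ℕ} {ρ A C : ℝ} (hρ0 : 0 ≤ ρ) (hρ : ρ < m + 1)
    {φ : E → ℂ} (hφ : Differentiable ℂ φ)
    (hgrowth : ∀ z, ‖φ z‖ ≤ C * Real.exp (A * ‖z‖ ^ ρ)) {a : E} (ha : φ a ≠ 0)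
    (hlines : ∀ z ≠ 0, ∃ (p : Polynomial ℂ) (h : ℂ → ℂ), p.natDegree ≤ N ∧ Differentiable ℂ h ∧
      (∀ t, h t ≠ 0) ∧ ∀ t, φ (a + t • z) = p.eval t * h t) :
    ∃ P Q : MvPolynomial ι ℂ, P.totalDegree ≤ N ∧ Q.totalDegree ≤ m ∧
      ∀ z, φ z = eval (b.repr z) P * Complex.exp (eval (b.repr z) Q) := by
  choose l q hq hq0 hfac using FewZeros.exists_prod_mul_exp_on_line hρ0 hρ hgrowth ha hlines
  obtain ⟨p, r, hp, hr, hfac⟩ := FewZeros.exists_polynomialOnLines_mul_exp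
    (ψ := fun z => (φ a)⁻¹ * φ (a + z)) (by fun_prop) (by simp [ha]) hq hq0 hfac
  rw [Fintype.card_fin] at hp
  obtain ⟨P, hPdeg, hP⟩ := ((hp.comp_add_right (-a)).const_mul (φ a)).exists_mvPolynomial b
  obtain ⟨Q, hQdeg, hQ⟩ := (hr.comp_add_right (-a)).exists_mvPolynomial b
  refine ⟨P, Q, hPdeg, hQdeg, fun z => ?_⟩
  rw [← hP, ← hQ, mul_assoc, ← hfac, mul_inv_cancel_left₀ ha, add_neg_cancel_comm_assoc]

/-- Lemma 2.3. An entire function `φ` on `ℂ^d` of order at most 2 which, on every complex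
line, either vanishes identically or has at most `N` zeros counted with multiplicity
(i.e. factors there as a polynomial of degree `≤ N` times a nonvanishing entire function),
is of the form `φ(z) = P(z)e^{Q(z)}` with `deg P ≤ N` and `deg Q ≤ 2`. -/
theorem entire_order_two_few_zeros
    (d N : ℕ) (φ : EuclideanSpace ℂ (Fin d) → ℂ)
    (hent : Differentiable ℂ φ)
    (horder : ∀ ε : ℝ, 0 < ε → ∃ C : ℝ, ∀ z : EuclideanSpace ℂ (Fin d),
      ‖φ z‖ ≤ C * Real.exp (‖z‖ ^ (2 + ε)))
    (hlines : ∀ a z : EuclideanSpace ℂ (Fin d), z ≠ 0 →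
      (∀ t : ℂ, φ (a + t • z) = 0) ∨
      (∃ (p : Polynomial ℂ) (h : ℂ → ℂ), p.natDegree ≤ N ∧ Differentiable ℂ h ∧
        (∀ t : ℂ, h t ≠ 0) ∧ ∀ t : ℂ, φ (a + t • z) = p.eval t * h t)) :
    ∃ (P Q : MvPolynomial (Fin d) ℂ), P.totalDegree ≤ N ∧ Q.totalDegree ≤ 2 ∧
      ∀ z : EuclideanSpace ℂ (Fin d), φ z =
        MvPolynomial.eval (fun i => z i) P *
          Complex.exp (MvPolynomial.eval (fun i => z i) Q) := by
  rcases eq_or_ne φ 0 with rfl | hφ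
  · exact ⟨0, 0, by simp, by simp, fun z => by simp⟩
  obtain ⟨a, ha⟩ := Function.ne_iff.1 hφ
  obtain ⟨C, hC⟩ := horder (1 / 2) one_half_pos
  exact entire_order_two_few_zeros_general (EuclideanSpace.basisFun (Fin d) ℂ).toBasis
    (ρ := 2 + 1 / 2) (A := 1) (by norm_num) (by norm_num) hent (by simpa only [one_mul] using hC)
    ha fun z hz => (hlines a z hz).resolve_left fun hzero => ha (by simpa using hzero 0)
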